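/- Let A be the rooted 'comb' tree: the root r has infinitely many children u_{i,1} (i ∈ ℕ), and each u_{i,j} has exactly one child u_{i,j+1}. Let 1 < p < ∞ and let λ be a weight with λ(r→u_{i,j}) = α_i β_j for complex sequences (α_i), (β_j), such that B_λ is bounded on ℓ^p(A). If B_λ is hypercyclic on ℓ^p(A), then (α_i) ∈ ℓ^{p*}(ℕ) and there is an increasing sequence (n_k) such that |β_{n_k}| → ∞ and |λ(u_{i,j} → u_{i,j+n_k})| → ∞ for all i,j; consequently sup_{u∈Chi^{n_k}(v)} |λ(v→u)| → ∞ for all v ∈ A, and hence B_λ is hypercyclic iff it has a hypercyclic algebra. -/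

import Mathlib

open Filter Topology
open scoped ENNReal NNReal

/-- A rooted directed tree on a vertex set `A`: a root, a parent map (with the convention
`par root = root`), such that every vertex reaches the root after finitely many steps.
This is equivalent to a connected acyclic directed graph in which every vertex other than
the root has exactly one parent and the root has none. -/
structure DirTree (A : Type*) where
  root : A
  par : A → A
  par_root : par root = root
  reaches : ∀ v, ∃ n, par^[n] v = root

namespace DirTree
variable {A : Type*} (T : DirTree A)

/-- The set of children of a vertex. -/
def chi (v : A) : Set A := {u | u ≠ T.root ∧ T.par u = v}

/-- `chiIter n v = Chi^n(v)`, the set of `n`-th descendants of `v`. -/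
def chiIter : ℕ → A → Set A
  | 0, v => {v}
  | n + 1, v => ⋃ u ∈ chiIter n v, T.chi u

/-- For `u ∈ Chi^n(v)`, `wt lam n u = λ(v → u) = ∏_{k<n} λ_{Par^k(u)}`. -/
def wt (lam : A → ℂ) (n : ℕ) (u : A) : ℂ :=
  ∏ k ∈ Finset.range n, lam (T.par^[k] u)

/-- `B` is the weighted backward shift with weight `lam` on `ℓ^p(A)`:
`(B f)(v) = ∑_{u ∈ Chi(v)} λ_u f(u)`. -/
def IsWBS (lam : A → ℂ) {p : ℝ≥0∞} [Fact (1 ≤ p)]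
    (B : lp (fun _ : A => ℂ) p →L[ℂ] lp (fun _ : A => ℂ) p) : Prop :=
  ∀ f : lp (fun _ : A => ℂ) p, ∀ v : A,
    (B f : ∀ _ : A, ℂ) v = ∑' u : T.chi v, lam u * (f : ∀ _ : A, ℂ) u

end DirTree

/-- The parent map of the rooted "comb" tree: the root `none` has children
`some (i, 0) = u_{i,1}` for every `i ∈ ℕ`, and each `u_{i,j} = some (i, j-1)` has the
single child `u_{i,j+1} = some (i, j)`. -/
def combPar : Option (ℕ × ℕ) → Option (ℕ × ℕ)
  | none => none
  | some (_, 0) => none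
  | some (i, j + 1) => some (i, j)

/-!
Sufficiency rests on Baire category. Suppose `sup_{u ∈ Chi^{n_k}(v)} |λ(v → u)| → ∞` for all `v`.
Given finitely supported `x`, `w` and `m ∈ ℕ`, perturb `x` by `∑ a_v e_{D v}`, where
`D v ∈ Chi^{n_k}(v)` has large weight and `a_v ^ (m + 1) = w_v / λ(v → D v)`. The perturbation tends
to `0`; applied to its powers with exponents `m + 1, m + 2, m + 3, …`, the iterate `B^{n_k}` gives
`w` and then sequences tending to `0`. So for a generic `f` the orbit of
`(f ^ (m + 1), f ^ (m + 2), …)` accumulates, for every `m`, at every `(w, 0, 0, …)`. Taking `m + 1`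
to be the lowest exponent in a nonzero element of the algebra generated by `f`, that element is
hypercyclic.

Conversely, a dense orbit of `f` follows the multiples of a vector with no zero coordinate, so some
subsequence `B^{m_k} f` tends to `∞` in every coordinate. As `u_{i,j}` has a single descendant in
each generation, the weights themselves tend to `∞` there. Finally `f ↦ (B f)(r)` is a bounded
functional with coefficients `α_i β_1` at the `u_{i,1}`, so `(α_i)` lies in `ℓ^{p*}`.
-/

section Universality

theorem eventually_residual_subset_closure_range {X Y ι : Type*} [TopologicalSpace X]
    [TopologicalSpace Y] [SecondCountableTopology Y] {g : ι → X → Y}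
    (hg : ∀ i, Continuous (g i)) {S : Set Y}
    (h : ∀ x, ∀ y ∈ S, (x, y) ∈ closure {q : X × Y | ∃ i, g i q.1 = q.2}) :
    ∀ᶠ x in residual X, S ⊆ closure (Set.range fun i => g i x) := by
  obtain ⟨b, hb, -, hbasis⟩ := TopologicalSpace.exists_countable_basis Y
  have hmeet : ∀ u ∈ b, ∀ᶠ x in residual X, (S ∩ u).Nonempty → ∃ i, g i x ∈ u := by
    intro u hu
    by_cases hSu : (S ∩ u).Nonempty
    swap
    · exact .of_forall fun x hx => absurd hx hSu
    obtain ⟨y, hyS, hyu⟩ := hSu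
    have hopen : IsOpen (⋃ i, g i ⁻¹' u) :=
      isOpen_iUnion fun i => (hbasis.isOpen hu).preimage (hg i)
    have hdense : Dense (⋃ i, g i ⁻¹' u) := by
      rw [dense_iff_inter_open]
      rintro V hV ⟨x, hx⟩
      obtain ⟨⟨x', _⟩, ⟨hx', hu'⟩, i, rfl : g i x' = _⟩ :=
        mem_closure_iff.1 (h x y hyS) (V ×ˢ u) (hV.prod (hbasis.isOpen hu)) ⟨hx, hyu⟩
      exact ⟨x', hx', Set.mem_iUnion.2 ⟨i, hu'⟩⟩
    filter_upwards [residual_of_dense_open hopen hdense] with x hx _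
    exact Set.mem_iUnion.1 hx
  filter_upwards [(eventually_countable_ball hb).2 hmeet] with x hx y hy
  refine hbasis.mem_closure_iff.2 fun u hu hyu => ?_
  obtain ⟨i, hi⟩ := hx u hu ⟨y, hy, hyu⟩
  exact ⟨g i x, hi, i, rfl⟩

theorem eventually_residual_dense_range_pow_polynomial {𝕜 X : Type*} [Field 𝕜] [AddCommGroup X]
    [Module 𝕜 X] [TopologicalSpace X] [ContinuousAdd X] [ContinuousConstSMul 𝕜 X]
    [SecondCountableTopology X] (T : X →L[𝕜] X) {e : ℕ → X → X} (he : ∀ k, Continuous (e k))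
    (h : ∀ (m : ℕ) (x w : X), (x, Pi.single 0 w) ∈
      closure {q : X × (ℕ → X) | ∃ N : ℕ, (fun k => (T ^ N) (e (m + k) q.1)) = q.2}) :
    ∀ᶠ f in residual X, ∀ P : Polynomial 𝕜, P ≠ 0 →
      Dense (Set.range fun N : ℕ => (T ^ N) (P.sum fun k c => c • e k f)) := by
  have hpowers : ∀ᶠ f in residual X, ∀ m : ℕ,
      Set.range (fun w : X => (Pi.single 0 w : ℕ → X)) ⊆
        closure (Set.range fun N : ℕ => fun k => (T ^ N) (e (m + k) f)) := by
    refine eventually_countable_forall.2 fun m => ?_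
    refine eventually_residual_subset_closure_range
      (fun N => continuous_pi fun k => (T ^ N).continuous.comp (he _)) ?_
    rintro x _ ⟨w, rfl⟩
    exact h m x w
  filter_upwards [hpowers] with f hf P hP w
  set m := P.natTrailingDegree
  have hc : P.coeff m ≠ 0 := Polynomial.trailingCoeff_nonzero_iff_nonzero.2 hP
  let L : (ℕ → X) → X := fun y => P.sum fun k c => c • y (k - m)
  have hL : Continuous L :=
    continuous_finsetSum _ fun k _ => (continuous_apply _).const_smul _
  have hm : ∀ k ∈ P.support, m ≤ k := fun k hk =>
    Polynomial.natTrailingDegree_le_of_mem_supp k hk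
  have hLw : L (Pi.single 0 ((P.coeff m)⁻¹ • w)) = w := by
    calc L (Pi.single 0 ((P.coeff m)⁻¹ • w))
        = P.coeff m • (Pi.single 0 ((P.coeff m)⁻¹ • w) : ℕ → X) (m - m) := by
          refine Finset.sum_eq_single_of_mem m (Polynomial.mem_support_iff.2 hc) fun k hk hkm => ?_
          exact (congrArg _ (Pi.single_eq_of_ne
            (Nat.sub_ne_zero_of_lt ((hm k hk).lt_of_ne' hkm)) _)).trans (smul_zero _)
      _ = w := by rw [Nat.sub_self, Pi.single_eq_same, smul_inv_smul₀ hc]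
  have hmaps : Set.MapsTo L (Set.range fun N : ℕ => fun k => (T ^ N) (e (m + k) f))
      (Set.range fun N : ℕ => (T ^ N) (P.sum fun k c => c • e k f)) := by
    rintro _ ⟨N, rfl⟩
    refine ⟨N, ?_⟩
    simp only [L, Polynomial.sum_def, map_sum, map_smul]
    exact Finset.sum_congr rfl fun k hk => by rw [Nat.add_sub_cancel' (hm k hk)]
  exact hLw ▸ hmaps.closure hL (hf m ⟨_, rfl⟩)

end Universality

section Limits

theorem exists_pow_eq_tendsto_zero {ι 𝕜 : Type*} [NormedField 𝕜] [IsAlgClosed 𝕜] {l : Filter ι}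
    {c : ι → 𝕜} (hc : Tendsto c l (𝓝 0)) {n : ℕ} (hn : n ≠ 0) :
    ∃ a : ι → 𝕜, (∀ k, a k ^ n = c k) ∧ Tendsto a l (𝓝 0) := by
  choose a ha using fun k => IsAlgClosed.exists_pow_nat_eq (c k) (Nat.pos_of_ne_zero hn)
  refine ⟨a, ha, (Asymptotics.isLittleO_one_iff 𝕜).1 (Asymptotics.IsLittleO.of_pow (n := n) ?_ hn)⟩
  refine ((Asymptotics.isLittleO_one_iff 𝕜).2 hc).congr' (.of_forall fun k => ?_) ?_
  · exact (ha k).symm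
  · exact .of_forall fun _ => (one_pow n).symm

theorem exists_mem_tendsto_nhds_top {A : Type*} {s : ℕ → Set A} {g : ℕ → A → ℝ≥0∞}
    (h : Tendsto (fun k => ⨆ u ∈ s k, g k u) atTop (𝓝 ⊤)) :
    ∃ d : ℕ → A, (∀ᶠ k in atTop, d k ∈ s k) ∧ Tendsto (fun k => g k (d k)) atTop (𝓝 ⊤) := by
  let r : ℕ → ℝ≥0∞ := fun k => min ((⨆ u ∈ s k, g k u) / 2) k
  have hr : Tendsto r atTop (𝓝 ⊤) := by
    simpa only [ENNReal.top_div_of_ne_top ENNReal.ofNat_ne_top, min_self] using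
      (ENNReal.Tendsto.div_const (b := 2) h (.inl ENNReal.top_ne_zero)).min
        ENNReal.tendsto_nat_nhds_top
  have hlt : ∀ᶠ k in atTop, r k < ⨆ u ∈ s k, g k u := by
    filter_upwards [h.eventually_ne ENNReal.top_ne_zero] with k hk
    rcases eq_or_ne (⨆ u ∈ s k, g k u) ⊤ with htop | htop
    · exact htop ▸ (min_le_right _ _).trans_lt (ENNReal.natCast_lt_top k)
    · exact (min_le_left _ _).trans_lt (ENNReal.half_lt_self hk htop)
  have hmem : ∀ᶠ k in atTop, ∃ u, u ∈ s k ∧ r k < g k u := by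
    filter_upwards [hlt] with k hk
    simpa only [lt_iSup_iff, exists_prop] using hk
  obtain ⟨d, hd⟩ := hmem.choice
  exact ⟨d, hd.mono fun k hk => hk.1, tendsto_nhds_top_mono hr (hd.mono fun k hk => hk.2.le)⟩

end Limits

section DenseSequences

theorem frequently_mem_of_dense_range {X : Type*} [TopologicalSpace X] [T1Space X] [PerfectSpace X]
    {u : ℕ → X} (hu : Dense (Set.range u)) {U : Set X} (hU : IsOpen U) (hne : U.Nonempty) :
    ∃ᶠ n in atTop, u n ∈ U := by
  refine frequently_atTop.2 fun a => ?_
  obtain ⟨_, ⟨⟨n, rfl⟩, hn⟩, hnU⟩ :=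
    (hu.sdiff_finite ((Set.finite_Iio a).image u)).exists_mem_open hU hne
  exact ⟨n, not_lt.1 fun hna => hn ⟨n, hna, rfl⟩, hnU⟩

theorem exists_strictMono_tendsto_norm_of_dense_range {𝕜 X : Type*} [NontriviallyNormedField 𝕜]
    [NormedAddCommGroup X] [NormedSpace 𝕜 X] [Nontrivial X] {u : ℕ → X}
    (hu : Dense (Set.range u)) (x : X) :
    ∃ n : ℕ → ℕ, StrictMono n ∧ ∀ φ : X →L[𝕜] 𝕜, φ x ≠ 0 →
      Tendsto (fun k => ‖φ (u (n k))‖) atTop atTop := by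
  have : PerfectSpace X := perfectSpace_of_module 𝕜 X
  choose c hc using fun k : ℕ => NormedField.exists_lt_norm 𝕜 (k : ℝ)
  have hclose (k : ℕ) : ∃ᶠ n in atTop, u n ∈ Metric.ball (c k • x) 1 :=
    frequently_mem_of_dense_range hu Metric.isOpen_ball (Metric.nonempty_ball.2 one_pos)
  obtain ⟨n, hn, hun⟩ := extraction_forall_of_frequently hclose
  refine ⟨n, hn, fun φ hφ =>
    tendsto_atTop_mono (f := fun k : ℕ => k * ‖φ x‖ - ‖φ‖) (fun k => ?_) ?_⟩
  · have hdiff : ‖φ (c k • x - u (n k))‖ ≤ ‖φ‖ :=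
      φ.le_of_opNorm_le_of_le le_rfl (mem_ball_iff_norm'.1 (hun k)).le |>.trans_eq (mul_one _)
    calc k * ‖φ x‖ - ‖φ‖ ≤ ‖c k‖ * ‖φ x‖ - ‖φ (c k • x - u (n k))‖ := by
          gcongr
          exact (hc k).le
      _ = ‖φ (c k • x)‖ - ‖φ (c k • x) - φ (u (n k))‖ := by
          rw [map_sub, map_smul, norm_smul]
      _ ≤ ‖φ (u (n k))‖ := by
          rw [sub_le_iff_le_add, add_comm]
          exact norm_le_norm_sub_add _ _
  · exact tendsto_atTop_add_const_right _ _
      (tendsto_natCast_atTop_atTop.atTop_mul_const (norm_pos_iff.2 hφ))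

end DenseSequences

section SequenceSpaces

variable {A 𝕜 : Type*} {p : ℝ≥0∞} [Fact (1 ≤ p)]

variable (A 𝕜 p) in
theorem nontrivial_lp [Nonempty A] [NontriviallyNormedField 𝕜] :
    Nontrivial (lp (fun _ : A => 𝕜) p) := by
  classical
  exact (lp.isometry_single (E := fun _ : A => 𝕜) (Classical.arbitrary A)).injective.nontrivial

theorem tendsto_sum_single_zero [DecidableEq A] [NontriviallyNormedField 𝕜] {ι κ : Type*}
    {l : Filter κ} {s : Finset ι} (φ : κ → ι → A) {a : ι → κ → 𝕜}
    (ha : ∀ i ∈ s, Tendsto (a i) l (𝓝 0)) :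
    Tendsto (fun k => ∑ i ∈ s, lp.single p (φ k i) (a i k)) l
      (𝓝 (0 : lp (fun _ : A => 𝕜) p)) := by
  rw [← Finset.sum_const_zero (s := s)]
  refine tendsto_finsetSum _ fun i hi => squeeze_zero_norm (fun k => ?_)
    (tendsto_zero_iff_norm_tendsto_zero.1 (ha i hi))
  exact (lp.norm_single (zero_lt_one.trans_le Fact.out) _ _).le

variable (A 𝕜 p) in
theorem exists_lp_forall_apply_ne_zero [Countable A] [RCLike 𝕜] :
    ∃ x : lp (fun _ : A => 𝕜) p, ∀ v, x v ≠ 0 := by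
  obtain ⟨ε, hε, c, hc, -⟩ := NNReal.exists_pos_sum_of_countable one_ne_zero A
  have hmem : Memℓp (fun v => ((ε v : ℝ) : 𝕜)) 1 := by
    refine memℓp_gen ?_
    simpa using NNReal.summable_coe.2 hc.summable
  exact ⟨⟨_, hmem.of_exponent_ge Fact.out⟩, fun v => by simpa using (hε v).ne'⟩

theorem exists_strictMono_tendsto_norm_apply_of_dense_range [Countable A] [Nonempty A] [RCLike 𝕜]
    {u : ℕ → lp (fun _ : A => 𝕜) p} (hu : Dense (Set.range u)) :
    ∃ n : ℕ → ℕ, StrictMono n ∧ ∀ v, Tendsto (fun k => ‖u (n k) v‖) atTop atTop := by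
  obtain ⟨x, hx⟩ := exists_lp_forall_apply_ne_zero A 𝕜 p
  have : Nontrivial (lp (fun _ : A => 𝕜) p) := nontrivial_lp A 𝕜 p
  obtain ⟨n, hn, hlim⟩ := exists_strictMono_tendsto_norm_of_dense_range (𝕜 := 𝕜) hu x
  exact ⟨n, hn, fun v => hlim (lp.evalCLM 𝕜 (fun _ : A => 𝕜) p v) (hx v)⟩

theorem summable_norm_apply_single_rpow [DecidableEq A] [RCLike 𝕜] {q : ℝ}
    (hpq : p.toReal.HolderConjugate q) (φ : lp (fun _ : A => 𝕜) p →L[𝕜] 𝕜) :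
    Summable fun u => ‖φ (lp.single p u 1)‖ ^ q := by
  let a : A → 𝕜 := fun u => φ (lp.single p u 1)
  refine summable_of_sum_le (c := ‖φ‖ ^ q) (fun u => by positivity) fun s => ?_
  obtain ⟨g, hg, hag⟩ := (NNReal.isGreatest_Lp s (fun u => ‖a u‖₊) hpq.symm).1
  choose c hc hca using fun u => RCLike.exists_norm_eq_mul_self (a u)
  let f : lp (fun _ : A => 𝕜) p := ∑ u ∈ s, lp.single p u (c u * ((g u : ℝ) : 𝕜))
  have hf : ‖f‖ ≤ 1 := by
    have hnorm : ‖f‖ ^ p.toReal = ∑ u ∈ s, (g u : ℝ) ^ p.toReal := by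
      simpa [hc] using
        lp.norm_sum_single (p := p) hpq.pos (fun u => c u * ((g u : ℝ) : 𝕜)) s
    rw [← Real.rpow_le_rpow_iff (norm_nonneg _) zero_le_one hpq.pos, hnorm, Real.one_rpow]
    exact_mod_cast hg
  have hφf : φ f = ((∑ u ∈ s, ‖a u‖ * g u : ℝ) : 𝕜) := by
    rw [map_sum, RCLike.ofReal_sum]
    refine Finset.sum_congr rfl fun u _ => ?_
    have hsingle : (lp.single p u (c u * ((g u : ℝ) : 𝕜)) : lp (fun _ : A => 𝕜) p)
        = (c u * ((g u : ℝ) : 𝕜)) • lp.single p u 1 := by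
      rw [← lp.single_smul, smul_eq_mul, mul_one]
    rw [hsingle, map_smul, smul_eq_mul, mul_right_comm, RCLike.ofReal_mul, hca]
  have hle : ∑ u ∈ s, ‖a u‖ * g u ≤ ‖φ‖ := by
    have h := φ.le_of_opNorm_le_of_le le_rfl hf
    rwa [hφf, mul_one, RCLike.norm_ofReal, abs_of_nonneg (by positivity)] at h
  have hLq : ∑ u ∈ s, ‖a u‖ * g u = (∑ u ∈ s, ‖a u‖ ^ q) ^ (1 / q) := by
    simpa only [NNReal.coe_sum, NNReal.coe_mul, NNReal.coe_rpow, coe_nnnorm] using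
      congrArg NNReal.toReal hag
  rwa [hLq, one_div,
    Real.rpow_inv_le_iff_of_pos (by positivity) (norm_nonneg _) hpq.symm.pos] at hle

end SequenceSpaces

section CoordinatewiseProduct

theorem sum_single_apply_eq_zero {A ι E : Type*} [DecidableEq A] [NormedAddCommGroup E] {p : ℝ≥0∞}
    {s : Finset ι} {φ : ι → A} (a : ι → E) {u : A} (hu : ∀ i ∈ s, φ i ≠ u) :
    (∑ i ∈ s, lp.single p (φ i) (a i) : lp (fun _ : A => E) p) u = 0 := by
  rw [lp.coeFn_sum, Finset.sum_apply]
  exact Finset.sum_eq_zero fun i hi => lp.single_apply_ne p _ _ (hu i hi).symm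

variable {A 𝕜 : Type*} [NontriviallyNormedField 𝕜] {p : ℝ≥0∞} [Fact (1 ≤ p)]

variable (p) in
/-- The coordinatewise product of `ℓ^p(A)`, as a bounded bilinear map. -/
noncomputable def lpMul :
    lp (fun _ : A => 𝕜) p →L[𝕜] lp (fun _ : A => 𝕜) p →L[𝕜] lp (fun _ : A => 𝕜) p :=
  have hmul (f : lp (fun _ : A => 𝕜) p) (v : A) : ‖ContinuousLinearMap.mul 𝕜 𝕜 (f v)‖ ≤ ‖f‖ :=
    (ContinuousLinearMap.opNorm_mul_apply_le 𝕜 𝕜 _).trans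
      (lp.norm_apply_le_norm (zero_lt_one.trans_le Fact.out).ne' f v)
  LinearMap.mkContinuous
    { toFun f := lp.mapCLM p (fun v => ContinuousLinearMap.mul 𝕜 𝕜 (f v)) (norm_nonneg f) (hmul f)
      map_add' f f' := by ext g v; exact add_mul _ _ _
      map_smul' c f := by ext g v; exact mul_assoc _ _ _ }
    1 fun f => by
      rw [one_mul]
      exact lp.norm_mapCLM_le p _ (norm_nonneg f) (hmul f)

theorem lpMul_apply (f g : lp (fun _ : A => 𝕜) p) (v : A) : lpMul p f g v = f v * g v := rfl

/-- `lpPow f n` is the coordinatewise power `f ^ (n + 1)`; the shift in the exponent is there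
because `ℓ^p(A)` has no unit. -/
noncomputable def lpPow (f : lp (fun _ : A => 𝕜) p) (n : ℕ) : lp (fun _ : A => 𝕜) p :=
  (lpMul p f ^ n) f

theorem lpPow_apply (f : lp (fun _ : A => 𝕜) p) (n : ℕ) (v : A) :
    lpPow f n v = f v ^ (n + 1) := by
  induction n with
  | zero => simp [lpPow]
  | succ n ih =>
    rw [lpPow, pow_succ', mul_apply_eq_comp, lpMul_apply, ← lpPow, ih, pow_succ' (f v) (n + 1)]

theorem continuous_lpPow (n : ℕ) : Continuous fun f : lp (fun _ : A => 𝕜) p => lpPow f n :=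
  ((lpMul p).continuous.pow n).clm_apply continuous_id

theorem lpPow_add_of_disjoint {f g : lp (fun _ : A => 𝕜) p} (h : ∀ v, f v = 0 ∨ g v = 0) (n : ℕ) :
    lpPow (f + g) n = lpPow f n + lpPow g n := by
  ext v
  simp only [lpPow_apply, lp.coeFn_add, Pi.add_apply]
  rcases h v with h | h <;> simp [h]

section Single

variable [DecidableEq A]

theorem lpPow_single (v : A) (c : 𝕜) (n : ℕ) :
    lpPow (lp.single p v c : lp (fun _ : A => 𝕜) p) n = lp.single p v (c ^ (n + 1)) := by
  ext u
  rw [lpPow_apply]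
  rcases eq_or_ne u v with rfl | h
  · simp
  · simp [h]

theorem lpPow_sum_single {ι : Type*} {s : Finset ι} {φ : ι → A} (hφ : Set.InjOn φ s) (a : ι → 𝕜)
    (n : ℕ) :
    lpPow (∑ i ∈ s, lp.single p (φ i) (a i) : lp (fun _ : A => 𝕜) p) n
      = ∑ i ∈ s, lp.single p (φ i) (a i ^ (n + 1)) := by
  classical
  induction s using Finset.induction_on with
  | empty =>
    ext v
    simp [lpPow_apply]
  | insert i s hi ih =>
    rw [Finset.coe_insert, Set.injOn_insert (Finset.mem_coe.not.2 hi)] at hφ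
    rw [Finset.sum_insert hi, Finset.sum_insert hi, lpPow_add_of_disjoint, lpPow_single, ih hφ.1]
    intro v
    rcases eq_or_ne v (φ i) with rfl | h
    · exact Or.inr (sum_single_apply_eq_zero a fun j hj h => hφ.2 ⟨j, hj, h⟩)
    · exact Or.inl (lp.single_apply_ne p _ _ h)

end Single

/-- `lpAeval f P` is `f * P(f)`, so that `lpAeval f` parametrises by the polynomials `P` the
subalgebra of `ℓ^p(A)` generated by `f`. -/
noncomputable def lpAeval (f : lp (fun _ : A => 𝕜) p) (P : Polynomial 𝕜) : lp (fun _ : A => 𝕜) p :=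
  P.sum fun k c => c • lpPow f k

theorem lpAeval_apply (f : lp (fun _ : A => 𝕜) p) (P : Polynomial 𝕜) (v : A) :
    lpAeval f P v = f v * P.eval (f v) := by
  simp only [lpAeval, Polynomial.sum_def, Polynomial.eval_eq_sum, lp.coeFn_sum, Finset.sum_apply,
    lp.coeFn_smul, Pi.smul_apply, lpPow_apply, smul_eq_mul, Finset.mul_sum]
  exact Finset.sum_congr rfl fun k _ => by ring

/-- `S` is a hypercyclic algebra for `B`: a nonzero subalgebra of `ℓ^p(A)`, for the coordinatewise
product, all of whose nonzero elements are hypercyclic vectors of `B`. -/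
def IsHypercyclicAlgebra (B : lp (fun _ : A => 𝕜) p →L[𝕜] lp (fun _ : A => 𝕜) p)
    (S : Set (lp (fun _ : A => 𝕜) p)) : Prop :=
  (∃ f ∈ S, f ≠ 0) ∧
  (∀ f ∈ S, ∀ g ∈ S, f + g ∈ S) ∧
  (∀ c : 𝕜, ∀ f ∈ S, c • f ∈ S) ∧
  (∀ f ∈ S, ∀ g ∈ S, ∃ h ∈ S, ∀ v, h v = f v * g v) ∧
  (∀ f ∈ S, f ≠ 0 → Dense (Set.range fun n : ℕ => (B ^ n) f))

theorem isHypercyclicAlgebra_range_lpAeval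
    {B : lp (fun _ : A => 𝕜) p →L[𝕜] lp (fun _ : A => 𝕜) p} {f : lp (fun _ : A => 𝕜) p}
    (hf0 : f ≠ 0)
    (hf : ∀ P : Polynomial 𝕜, P ≠ 0 → Dense (Set.range fun n : ℕ => (B ^ n) (lpAeval f P))) :
    IsHypercyclicAlgebra B (Set.range (lpAeval f)) := by
  refine ⟨⟨f, ⟨1, ?_⟩, hf0⟩, ?_, ?_, ?_, ?_⟩
  · ext v
    simp [lpAeval_apply]
  · rintro _ ⟨P, rfl⟩ _ ⟨Q, rfl⟩
    refine ⟨P + Q, ?_⟩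
    ext v
    simp [lpAeval_apply, mul_add]
  · rintro c _ ⟨P, rfl⟩
    refine ⟨Polynomial.C c * P, ?_⟩
    ext v
    simp [lpAeval_apply, mul_left_comm]
  · rintro _ ⟨P, rfl⟩ _ ⟨Q, rfl⟩
    refine ⟨_, ⟨P * Polynomial.X * Q, rfl⟩, fun v => ?_⟩
    simp only [lpAeval_apply, Polynomial.eval_mul, Polynomial.eval_X, mul_assoc]
  · rintro _ ⟨P, rfl⟩ hP
    refine hf P ?_
    rintro rfl
    exact hP (by ext v; simp [lpAeval_apply])

end CoordinatewiseProduct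

namespace DirTree

variable {A : Type*} {T : DirTree A} {lam : A → ℂ}

theorem mem_chiIter_succ {n : ℕ} {u v : A} :
    u ∈ T.chiIter (n + 1) v ↔ u ≠ T.root ∧ T.par u ∈ T.chiIter n v := by
  simp only [chiIter, chi, Set.mem_iUnion₂, Set.mem_ofPred_eq, exists_prop]
  exact ⟨fun ⟨w, hw, hu, huw⟩ => ⟨hu, huw.symm ▸ hw⟩, fun ⟨hu, hw⟩ => ⟨_, hw, hu, rfl⟩⟩

theorem iterate_par_of_mem_chiIter {n : ℕ} {u v : A} (hu : u ∈ T.chiIter n v) :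
    T.par^[n] u = v := by
  induction n generalizing u with
  | zero => exact hu
  | succ n ih => exact ih (mem_chiIter_succ.1 hu).2

theorem iterate_par_ne_root_of_mem_chiIter {m n : ℕ} {u v : A} (hu : u ∈ T.chiIter n v)
    (hm : m < n) : T.par^[m] u ≠ T.root := by
  induction m generalizing n u with
  | zero =>
    obtain ⟨n, rfl⟩ := Nat.exists_eq_succ_of_ne_zero hm.ne'
    exact (mem_chiIter_succ.1 hu).1
  | succ m ih =>
    obtain ⟨n, rfl⟩ := Nat.exists_eq_succ_of_ne_zero (Nat.ne_zero_of_lt hm)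
    exact ih (mem_chiIter_succ.1 hu).2 (Nat.lt_of_succ_lt_succ hm)

variable (T) in
theorem eventually_exists_iterate_par_eq_root (u : A) :
    ∀ᶠ n in atTop, ∃ m < n, T.par^[m] u = T.root := by
  obtain ⟨m, hm⟩ := T.reaches u
  filter_upwards [eventually_gt_atTop m] with n hn using ⟨m, hn, hm⟩

variable (T lam) in
theorem wt_add (m n : ℕ) (u : A) :
    T.wt lam (m + n) u = T.wt lam m u * T.wt lam n (T.par^[m] u) := by
  simp only [wt, Finset.prod_range_add, ← Function.iterate_add_apply, add_comm]

variable (T lam) in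
theorem wt_succ (n : ℕ) (u : A) : T.wt lam (n + 1) u = lam u * T.wt lam n (T.par u) := by
  simp only [wt, Finset.prod_range_succ', Function.iterate_succ_apply, Function.iterate_zero_apply,
    mul_comm]

namespace IsWBS

variable {p : ℝ≥0∞} [Fact (1 ≤ p)] {B : lp (fun _ : A => ℂ) p →L[ℂ] lp (fun _ : A => ℂ) p}

theorem apply_of_chi_eq_singleton (hB : T.IsWBS lam B) {u v : A} (hv : T.chi v = {u})
    (f : lp (fun _ : A => ℂ) p) : B f v = lam u * f u := by
  rw [hB, hv]
  exact tsum_singleton u fun w => lam w * f w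

section Single

variable [DecidableEq A]

theorem map_single_root (hB : T.IsWBS lam B) (c : ℂ) : B (lp.single p T.root c) = 0 := by
  ext v
  rw [hB]
  refine (tsum_congr fun u => ?_).trans tsum_zero
  rw [lp.single_apply_ne p _ _ u.2.1, mul_zero]

theorem map_single (hB : T.IsWBS lam B) {u : A} (hu : u ≠ T.root) (c : ℂ) :
    B (lp.single p u c) = lp.single p (T.par u) (lam u * c) := by
  ext v
  rw [hB]
  rcases eq_or_ne v (T.par u) with rfl | hv
  · rw [lp.single_apply_self, tsum_eq_single ⟨u, hu, rfl⟩, lp.single_apply_self]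
    intro w hw
    rw [lp.single_apply_ne p _ _ fun h => hw (Subtype.ext h), mul_zero]
  · rw [lp.single_apply_ne p _ _ hv]
    refine (tsum_congr fun w => ?_).trans tsum_zero
    rw [lp.single_apply_ne p _ _ (by rintro rfl; exact hv w.2.2.symm), mul_zero]

theorem pow_map_single (hB : T.IsWBS lam B) {n : ℕ} {u v : A} (hu : u ∈ T.chiIter n v) (c : ℂ) :
    (B ^ n) (lp.single p u c) = lp.single p v (T.wt lam n u * c) := by
  induction n generalizing u c with
  | zero =>
    obtain rfl : u = v := hu
    simp [wt]
  | succ n ih =>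
    obtain ⟨hroot, hpar⟩ := mem_chiIter_succ.1 hu
    rw [pow_succ, mul_apply_eq_comp, hB.map_single hroot, ih hpar, wt_succ, mul_left_comm,
      mul_assoc]

theorem pow_map_single_eq_zero (hB : T.IsWBS lam B) {m n : ℕ} (hmn : m < n) {u : A}
    (hu : T.par^[m] u = T.root) (c : ℂ) : (B ^ n) (lp.single p u c) = 0 := by
  induction n generalizing m u c with
  | zero => exact absurd hmn m.not_lt_zero
  | succ n ih =>
    rw [pow_succ, mul_apply_eq_comp]
    by_cases hroot : u = T.root
    · rw [hroot, hB.map_single_root, map_zero]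
    · cases m with
      | zero => exact absurd hu hroot
      | succ m => rw [hB.map_single hroot, ih (Nat.lt_of_succ_lt_succ hmn) hu]

theorem pow_map_lpPow_sum_single (hB : T.IsWBS lam B) {N : ℕ} {F : Finset A}
    (hF : ∀ u ∈ F, ∃ m < N, T.par^[m] u = T.root) {D : A → A} (hD : ∀ v ∈ F, D v ∈ T.chiIter N v)
    (x a : A → ℂ) (q : ℕ) :
    (B ^ N) (lpPow (∑ v ∈ F, lp.single p v (x v) + ∑ v ∈ F, lp.single p (D v) (a v)) q)
      = ∑ v ∈ F, lp.single p v (T.wt lam N (D v) * a v ^ (q + 1)) := by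
  have hDF : ∀ v ∈ F, D v ∉ F := by
    intro v hv hvF
    obtain ⟨m, hmN, hm⟩ := hF _ hvF
    exact iterate_par_ne_root_of_mem_chiIter (hD v hv) hmN hm
  have hDinj : Set.InjOn D F :=
    Set.LeftInvOn.injOn fun v hv => iterate_par_of_mem_chiIter (hD v hv)
  have hdisj (u : A) : (∑ v ∈ F, lp.single p v (x v) : lp (fun _ : A => ℂ) p) u = 0 ∨
      (∑ v ∈ F, lp.single p (D v) (a v) : lp (fun _ : A => ℂ) p) u = 0 := by
    by_cases hu : u ∈ F
    · exact .inr (sum_single_apply_eq_zero a fun v hv h => hDF v hv (h ▸ hu))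
    · exact .inl (sum_single_apply_eq_zero (φ := id) x fun v hv h => hu (h ▸ hv))
  have hkill : ∀ v ∈ F, (B ^ N) (lp.single p v (x v ^ (q + 1))) = 0 := by
    intro v hv
    obtain ⟨m, hmN, hm⟩ := hF v hv
    exact hB.pow_map_single_eq_zero hmN hm _
  rw [lpPow_add_of_disjoint hdisj, lpPow_sum_single (φ := fun v => v) Function.injective_id.injOn,
    lpPow_sum_single hDinj, map_add, map_sum, map_sum, Finset.sum_eq_zero hkill, zero_add]
  exact Finset.sum_congr rfl fun v hv => hB.pow_map_single (hD v hv) _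

end Single

theorem sum_single_mem_closure_pow_lpPow [DecidableEq A] (hB : T.IsWBS lam B) {n : ℕ → ℕ}
    (hn : Tendsto n atTop atTop) {D : ℕ → A → A}
    (hD : ∀ v, ∀ᶠ k in atTop, D k v ∈ T.chiIter (n k) v)
    (hW : ∀ v, Tendsto (fun k => ‖T.wt lam (n k) (D k v)‖) atTop atTop) (m : ℕ) (F : Finset A)
    (x w : A → ℂ) :
    ((∑ v ∈ F, lp.single p v (x v), Pi.single 0 (∑ v ∈ F, lp.single p v (w v))) :
        lp (fun _ : A => ℂ) p × (ℕ → lp (fun _ : A => ℂ) p)) ∈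
      closure {q | ∃ N : ℕ, (fun k => (B ^ N) (lpPow q.1 (m + k))) = q.2} := by
  have hroot (v : A) : ∃ a : ℕ → ℂ, (∀ k, a k ^ (m + 1) = w v / T.wt lam (n k) (D k v)) ∧
      Tendsto a atTop (𝓝 0) := by
    refine exists_pow_eq_tendsto_zero (tendsto_zero_iff_norm_tendsto_zero.2 ?_) m.succ_ne_zero
    simpa only [norm_div] using tendsto_const_nhds.div_atTop (hW v)
  choose a ha ha0 using hroot
  let z : ℕ → lp (fun _ : A => ℂ) p := fun k =>
    ∑ v ∈ F, lp.single p v (x v) + ∑ v ∈ F, lp.single p (D k v) (a v k)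
  have hz : Tendsto z atTop (𝓝 (∑ v ∈ F, lp.single p v (x v))) := by
    have hsmall := tendsto_sum_single_zero (p := p) D fun v (_ : v ∈ F) => ha0 v
    simpa only [add_zero] using tendsto_const_nhds.add hsmall
  have hBz (q : ℕ) : ∀ᶠ k in atTop, (B ^ n k) (lpPow (z k) (m + q))
      = ∑ v ∈ F, lp.single p v (w v * a v k ^ q) := by
    have hF : ∀ᶠ k in atTop, ∀ u ∈ F, ∃ j < n k, T.par^[j] u = T.root :=
      (eventually_all_finset F).2 fun u _ =>
        hn.eventually (T.eventually_exists_iterate_par_eq_root u)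
    have hW0 (v : A) : ∀ᶠ k in atTop, T.wt lam (n k) (D k v) ≠ 0 :=
      ((hW v).eventually_gt_atTop 0).mono fun k => norm_pos_iff.1
    filter_upwards [hF, (eventually_all_finset F).2 fun v _ => hD v,
      (eventually_all_finset F).2 fun v _ => hW0 v] with k hFk hDk hWk
    rw [hB.pow_map_lpPow_sum_single hFk hDk]
    refine Finset.sum_congr rfl fun v hv => ?_
    rw [add_right_comm, pow_add, ha, ← mul_assoc, mul_div_cancel₀ _ (hWk v hv)]
  have hpowers : Tendsto (fun k q => (B ^ n k) (lpPow (z k) (m + q))) atTop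
      (𝓝 (Pi.single 0 (∑ v ∈ F, lp.single p v (w v)))) := by
    refine tendsto_pi_nhds.2 fun q => Tendsto.congr' ((hBz q).mono fun _ => Eq.symm) ?_
    have hlim : Tendsto (fun k => ∑ v ∈ F, lp.single (E := fun _ : A => ℂ) p v (w v * a v k ^ q))
        atTop (𝓝 (∑ v ∈ F, lp.single p v (w v * 0 ^ q))) :=
      tendsto_finsetSum _ fun v _ =>
        ((lp.isometry_single v).continuous.tendsto _).comp (((ha0 v).pow q).const_mul (w v))
    rcases q with _ | q
    · simp
    · simpa using hlim
  exact mem_closure_of_tendsto (hz.prodMk_nhds hpowers) (.of_forall fun k => ⟨n k, rfl⟩)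

theorem mem_closure_pow_lpPow (hB : T.IsWBS lam B) (hp : p ≠ ∞) {n : ℕ → ℕ}
    (hn : Tendsto n atTop atTop)
    (hsup : ∀ v, Tendsto (fun k => ⨆ u ∈ T.chiIter (n k) v, (‖T.wt lam (n k) u‖₊ : ℝ≥0∞))
      atTop (𝓝 ⊤)) (m : ℕ) (x w : lp (fun _ : A => ℂ) p) :
    (x, Pi.single 0 w) ∈ closure {q : lp (fun _ : A => ℂ) p × (ℕ → lp (fun _ : A => ℂ) p) |
      ∃ N : ℕ, (fun k => (B ^ N) (lpPow q.1 (m + k))) = q.2} := by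
  classical
  choose d hd hdtop using fun v => exists_mem_tendsto_nhds_top (hsup v)
  have hW (v : A) : Tendsto (fun k => ‖T.wt lam (n k) (d v k)‖) atTop atTop :=
    NNReal.tendsto_coe_atTop.2 (ENNReal.tendsto_coe_nhds_top.1 (hdtop v))
  have hfinite := hB.sum_single_mem_closure_pow_lpPow hn (D := fun k v => d v k) hd hW m
  have hlim := (lp.hasSum_single hp x).prodMk_nhds
    (((continuous_single (A := fun _ : ℕ => lp (fun _ : A => ℂ) p) 0).tendsto w).comp
      (lp.hasSum_single hp w))
  exact isClosed_closure.mem_of_tendsto hlim (.of_forall fun F => hfinite F x w)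

theorem exists_isHypercyclicAlgebra [Nonempty A]
    [TopologicalSpace.SeparableSpace (lp (fun _ : A => ℂ) p)]
    (hB : T.IsWBS lam B) (hp : p ≠ ∞) {n : ℕ → ℕ} (hn : Tendsto n atTop atTop)
    (hsup : ∀ v, Tendsto (fun k => ⨆ u ∈ T.chiIter (n k) v, (‖T.wt lam (n k) u‖₊ : ℝ≥0∞))
      atTop (𝓝 ⊤)) :
    ∃ S, IsHypercyclicAlgebra B S := by
  have : SecondCountableTopology (lp (fun _ : A => ℂ) p) :=
    UniformSpace.secondCountable_of_separable _
  have : Nontrivial (lp (fun _ : A => ℂ) p) := nontrivial_lp A ℂ p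
  have hresidual := eventually_residual_dense_range_pow_polynomial B continuous_lpPow
    (hB.mem_closure_pow_lpPow hp hn hsup)
  obtain ⟨f, hf, hf0⟩ := (dense_of_mem_residual hresidual).exists_mem_open isOpen_ne
    (exists_ne (0 : lp (fun _ : A => ℂ) p))
  exact ⟨_, isHypercyclicAlgebra_range_lpAeval hf0 hf⟩

end IsWBS

end DirTree

section Comb

variable {T : DirTree (Option (ℕ × ℕ))} {lam : Option (ℕ × ℕ) → ℂ} {αs βs : ℕ → ℂ}

theorem chi_some_of_comb (hroot : T.root = none) (hpar : T.par = combPar) (i j : ℕ) :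
    T.chi (some (i, j)) = {some (i, j + 1)} := by
  ext u
  rw [DirTree.chi, hroot, hpar]
  rcases u with _ | ⟨i', _ | j'⟩ <;> simp [combPar]

theorem some_mem_chiIter_some_of_comb (hroot : T.root = none) (hpar : T.par = combPar)
    (i j n : ℕ) : some (i, j + n) ∈ T.chiIter n (some (i, j)) := by
  induction n with
  | zero => exact Set.mem_singleton _
  | succ n ih =>
    refine DirTree.mem_chiIter_succ.2 ⟨hroot ▸ Option.some_ne_none _, ?_⟩
    rwa [hpar]

theorem some_mem_chiIter_none_of_comb (hroot : T.root = none) (hpar : T.par = combPar)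
    (i n : ℕ) : some (i, n) ∈ T.chiIter (n + 1) none := by
  induction n with
  | zero =>
    refine DirTree.mem_chiIter_succ.2 ⟨hroot ▸ Option.some_ne_none _, ?_⟩
    rw [hpar]
    exact Set.mem_singleton _
  | succ n ih =>
    refine DirTree.mem_chiIter_succ.2 ⟨hroot ▸ Option.some_ne_none _, ?_⟩
    rwa [hpar]

theorem ne_zero_of_wt_comb (hlam : ∀ v, lam v ≠ 0)
    (hfact : ∀ i j : ℕ, T.wt lam (j + 1) (some (i, j)) = αs i * βs (j + 1)) (i j : ℕ) :
    αs i ≠ 0 ∧ βs (j + 1) ≠ 0 := by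
  rw [← mul_ne_zero_iff, ← hfact]
  exact Finset.prod_ne_zero_iff.2 fun _ _ => hlam _

theorem wt_some_of_comb (hroot : T.root = none) (hpar : T.par = combPar) (hlam : ∀ v, lam v ≠ 0)
    (hfact : ∀ i j : ℕ, T.wt lam (j + 1) (some (i, j)) = αs i * βs (j + 1)) (i j n : ℕ) :
    T.wt lam n (some (i, j + n)) = βs (n + (j + 1)) / βs (j + 1) := by
  obtain ⟨hα, hβ⟩ := ne_zero_of_wt_comb hlam hfact i j
  have hsplit : T.wt lam n (some (i, j + n)) * (αs i * βs (j + 1)) = αs i * βs (n + (j + 1)) := by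
    rw [← hfact i j,
      ← DirTree.iterate_par_of_mem_chiIter (some_mem_chiIter_some_of_comb hroot hpar i j n),
      ← DirTree.wt_add, add_left_comm, ← add_assoc, hfact]
  refine eq_div_of_mul_eq hβ (mul_left_cancel₀ hα ?_)
  rw [← hsplit, mul_left_comm]

theorem tendsto_iSup_wt_of_comb (hroot : T.root = none) (hpar : T.par = combPar)
    (hlam : ∀ v, lam v ≠ 0)
    (hfact : ∀ i j : ℕ, T.wt lam (j + 1) (some (i, j)) = αs i * βs (j + 1))
    {n : ℕ → ℕ} (hn : ∀ k, 0 < n k) (hβ : Tendsto (fun k => ‖βs (n k)‖) atTop atTop)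
    (hwt : ∀ i j : ℕ, Tendsto (fun k => ‖T.wt lam (n k) (some (i, j + n k))‖) atTop atTop)
    (v : Option (ℕ × ℕ)) :
    Tendsto (fun k => ⨆ u ∈ T.chiIter (n k) v, (‖T.wt lam (n k) u‖₊ : ℝ≥0∞)) atTop (𝓝 ⊤) := by
  suffices ∃ d : ℕ → Option (ℕ × ℕ), (∀ k, d k ∈ T.chiIter (n k) v) ∧
      Tendsto (fun k => ‖T.wt lam (n k) (d k)‖) atTop atTop by
    obtain ⟨d, hd, hlim⟩ := this
    have hlim_top : Tendsto (fun k => (‖T.wt lam (n k) (d k)‖₊ : ℝ≥0∞)) atTop (𝓝 ⊤) :=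
      ENNReal.tendsto_coe_nhds_top.2 (NNReal.tendsto_coe_atTop.1 hlim)
    exact tendsto_nhds_top_mono' hlim_top fun k => le_iSup₂_of_le (d k) (hd k) le_rfl
  rcases v with _ | ⟨i, j⟩
  · have hpred (k : ℕ) : n k - 1 + 1 = n k := Nat.sub_add_cancel (hn k)
    refine ⟨fun k => some (0, n k - 1), fun k => ?_, ?_⟩
    · simpa only [hpred] using some_mem_chiIter_none_of_comb hroot hpar 0 (n k - 1)
    · refine (hβ.const_mul_atTop (norm_pos_iff.2 (ne_zero_of_wt_comb hlam hfact 0 0).1)).congr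
        fun k => ?_
      rw [← norm_mul, ← hpred k, hfact]
  · exact ⟨fun k => some (i, j + n k),
      fun k => some_mem_chiIter_some_of_comb hroot hpar i j (n k), hwt i j⟩

variable {p : ℝ≥0∞} [Fact (1 ≤ p)]
  {B : lp (fun _ : Option (ℕ × ℕ) => ℂ) p →L[ℂ] lp (fun _ : Option (ℕ × ℕ) => ℂ) p}

theorem pow_apply_some_of_comb (hroot : T.root = none) (hpar : T.par = combPar)
    (hB : T.IsWBS lam B) (f : lp (fun _ : Option (ℕ × ℕ) => ℂ) p) (n i j : ℕ) :
    (B ^ n) f (some (i, j)) = T.wt lam n (some (i, j + n)) * f (some (i, j + n)) := by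
  induction n generalizing f with
  | zero => simp [DirTree.wt]
  | succ n ih =>
    have hpar_succ : T.par (some (i, j + n + 1)) = some (i, j + n) := by rw [hpar]; rfl
    rw [pow_succ, mul_apply_eq_comp, ih,
      hB.apply_of_chi_eq_singleton (chi_some_of_comb hroot hpar i (j + n)), ← add_assoc,
      DirTree.wt_succ, hpar_succ]
    ring

theorem exists_strictMono_tendsto_norm_of_comb (hroot : T.root = none) (hpar : T.par = combPar)
    (hlam : ∀ v, lam v ≠ 0)
    (hfact : ∀ i j : ℕ, T.wt lam (j + 1) (some (i, j)) = αs i * βs (j + 1))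
    (hB : T.IsWBS lam B) {f : lp (fun _ : Option (ℕ × ℕ) => ℂ) p}
    (hf : Dense (Set.range fun n : ℕ => (B ^ n) f)) :
    ∃ n : ℕ → ℕ, StrictMono n ∧ (∀ k, 0 < n k) ∧ ∀ j,
      Tendsto (fun k => ‖βs (n k + j)‖) atTop atTop := by
  obtain ⟨m, hm, hcoord⟩ := exists_strictMono_tendsto_norm_apply_of_dense_range hf
  refine ⟨fun k => m k + 1, hm.add_const 1, fun k => Nat.succ_pos _, fun j => ?_⟩
  have hβ := norm_pos_iff.2 (ne_zero_of_wt_comb hlam hfact 0 j).2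
  have hlim : Tendsto (fun k => ‖βs (m k + (j + 1))‖ * ((‖f‖ + 1) / ‖βs (j + 1)‖)) atTop atTop := by
    refine tendsto_atTop_mono (fun k => ?_) (hcoord (some (0, j)))
    calc ‖(B ^ m k) f (some (0, j))‖
        = ‖βs (m k + (j + 1))‖ / ‖βs (j + 1)‖ * ‖f (some (0, j + m k))‖ := by
          rw [pow_apply_some_of_comb hroot hpar hB, norm_mul,
            wt_some_of_comb hroot hpar hlam hfact, norm_div]
      _ ≤ ‖βs (m k + (j + 1))‖ / ‖βs (j + 1)‖ * (‖f‖ + 1) := by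
          gcongr
          exact (lp.norm_apply_le_norm (zero_lt_one.trans_le Fact.out).ne' f _).trans
            (le_add_of_nonneg_right zero_le_one)
      _ = ‖βs (m k + (j + 1))‖ * ((‖f‖ + 1) / ‖βs (j + 1)‖) := by ring
  have hpos : 0 < (‖f‖ + 1) / ‖βs (j + 1)‖ := by positivity
  refine ((tendsto_mul_const_atTop_of_pos hpos).1 hlim).congr fun k => ?_
  rw [add_right_comm, add_assoc]

theorem exists_strictMono_tendsto_iSup_wt_of_comb (hroot : T.root = none) (hpar : T.par = combPar)
    (hlam : ∀ v, lam v ≠ 0)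
    (hfact : ∀ i j : ℕ, T.wt lam (j + 1) (some (i, j)) = αs i * βs (j + 1))
    (hB : T.IsWBS lam B) {f : lp (fun _ : Option (ℕ × ℕ) => ℂ) p}
    (hf : Dense (Set.range fun n : ℕ => (B ^ n) f)) :
    ∃ n : ℕ → ℕ, StrictMono n ∧ (∀ k, 0 < n k) ∧
      Tendsto (fun k => ‖βs (n k)‖) atTop atTop ∧
      (∀ i j : ℕ, Tendsto (fun k => ‖T.wt lam (n k) (some (i, j + n k))‖) atTop atTop) ∧
      ∀ v, Tendsto (fun k => ⨆ u ∈ T.chiIter (n k) v, (‖T.wt lam (n k) u‖₊ : ℝ≥0∞))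
        atTop (𝓝 ⊤) := by
  obtain ⟨n, hmono, hpos, hβ⟩ :=
    exists_strictMono_tendsto_norm_of_comb hroot hpar hlam hfact hB hf
  have hwt (i j : ℕ) :
      Tendsto (fun k => ‖T.wt lam (n k) (some (i, j + n k))‖) atTop atTop := by
    refine ((hβ (j + 1)).atTop_div_const
      (norm_pos_iff.2 (ne_zero_of_wt_comb hlam hfact i j).2)).congr fun k => ?_
    rw [wt_some_of_comb hroot hpar hlam hfact, norm_div]
  exact ⟨n, hmono, hpos, hβ 0, hwt, tendsto_iSup_wt_of_comb hroot hpar hlam hfact hpos (hβ 0) hwt⟩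

theorem summable_norm_rpow_of_comb (hroot : T.root = none) (hpar : T.par = combPar)
    (hlam : ∀ v, lam v ≠ 0)
    (hfact : ∀ i j : ℕ, T.wt lam (j + 1) (some (i, j)) = αs i * βs (j + 1))
    (hB : T.IsWBS lam B) {q : ℝ} (hpq : p.toReal.HolderConjugate q) :
    Summable fun i => ‖αs i‖ ^ q := by
  have hβ := norm_pos_iff.2 (ne_zero_of_wt_comb hlam hfact 0 0).2
  have hinj : Function.Injective fun i : ℕ => (some (i, 0) : Option (ℕ × ℕ)) := fun i i' h => by
    simpa using h
  let φ := (lp.evalCLM ℂ (fun _ : Option (ℕ × ℕ) => ℂ) p none).comp B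
  have hφ (i : ℕ) : φ (lp.single p (some (i, 0)) 1) = αs i * βs 1 := by
    have hmem := some_mem_chiIter_none_of_comb hroot hpar i 0
    calc φ (lp.single p (some (i, 0)) 1)
        = (B ^ 1) (lp.single p (some (i, 0)) 1) none := by rw [pow_one]; rfl
      _ = αs i * βs 1 := by
        rw [hB.pow_map_single hmem, lp.single_apply_self, mul_one, hfact]
  have hsum := (summable_norm_apply_single_rpow hpq φ).comp_injective hinj
  refine (hsum.div_const (‖βs 1‖ ^ q)).congr fun i => ?_
  rw [Function.comp_apply, hφ, norm_mul, Real.mul_rpow (norm_nonneg _) (norm_nonneg _),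
    mul_div_cancel_right₀ _ (Real.rpow_pos_of_pos hβ q).ne']

end Comb

/-- Let `A` be the comb tree and let `λ` be a weight with
`λ(r→u_{i,j}) = α_i β_j`, such that the weighted backward shift `B` is bounded on
`ℓ^p(A)`, `1 < p < ∞`. If `B` is hypercyclic then `(α_i) ∈ ℓ^{p*}`, there is an
increasing sequence `(n_k)` along which `|β_{n_k}| → ∞` and
`|λ(u_{i,j}→u_{i,j+n_k})| → ∞` for all `i, j`, and consequently
`sup_{u ∈ Chi^{n_k}(v)} |λ(v→u)| → ∞` for every vertex `v`; hence `B` is hypercyclic if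
and only if it has a hypercyclic algebra for the coordinatewise product. -/
theorem stmt15 (T : DirTree (Option (ℕ × ℕ))) (hroot : T.root = none)
    (hpar : T.par = combPar)
    (lam : Option (ℕ × ℕ) → ℂ) (hlam : ∀ v, lam v ≠ 0)
    (αs βs : ℕ → ℂ)
    (hfact : ∀ i j : ℕ, T.wt lam (j + 1) (some (i, j)) = αs i * βs (j + 1))
    (p : ℝ≥0∞) [Fact (1 ≤ p)] (hp1 : 1 < p) (hp2 : p ≠ ∞)
    (B : lp (fun _ : Option (ℕ × ℕ) => ℂ) p →L[ℂ] lp (fun _ : Option (ℕ × ℕ) => ℂ) p)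
    (hB : T.IsWBS lam B) :
    ((∃ f, Dense (Set.range fun n : ℕ => (B ^ n) f)) →
      Summable (fun i : ℕ => ‖αs i‖ ^ (p.toReal / (p.toReal - 1))) ∧
      ∃ n : ℕ → ℕ, StrictMono n ∧ (∀ k, 0 < n k) ∧
        Tendsto (fun k : ℕ => ‖βs (n k)‖) atTop atTop ∧
        (∀ i j : ℕ,
          Tendsto (fun k : ℕ => ‖T.wt lam (n k) (some (i, j + n k))‖) atTop atTop) ∧
        (∀ v : Option (ℕ × ℕ),
          Tendsto (fun k : ℕ => ⨆ u ∈ T.chiIter (n k) v, (‖T.wt lam (n k) u‖₊ : ℝ≥0∞))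
            atTop (𝓝 ⊤))) ∧
    ((∃ f, Dense (Set.range fun n : ℕ => (B ^ n) f)) ↔
      ∃ S : Set (lp (fun _ : Option (ℕ × ℕ) => ℂ) p),
        (∃ f ∈ S, f ≠ 0) ∧
        (∀ f ∈ S, ∀ g ∈ S, f + g ∈ S) ∧
        (∀ c : ℂ, ∀ f ∈ S, c • f ∈ S) ∧
        (∀ f ∈ S, ∀ g ∈ S, ∃ h ∈ S, ∀ v : Option (ℕ × ℕ),
          (h : ∀ _ : Option (ℕ × ℕ), ℂ) v
            = (f : ∀ _ : Option (ℕ × ℕ), ℂ) v * (g : ∀ _ : Option (ℕ × ℕ), ℂ) v) ∧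
        (∀ f ∈ S, f ≠ 0 → Dense (Set.range fun n : ℕ => (B ^ n) f))) := by
  have hdesc {f} (hf : Dense (Set.range fun n : ℕ => (B ^ n) f)) :=
    exists_strictMono_tendsto_iSup_wt_of_comb hroot hpar hlam hfact hB hf
  refine ⟨fun ⟨f, hf⟩ => ⟨?_, hdesc hf⟩, fun ⟨f, hf⟩ => ?_, ?_⟩
  · have hp : 1 < p.toReal := by simpa using ENNReal.toReal_strict_mono hp2 hp1
    exact summable_norm_rpow_of_comb hroot hpar hlam hfact hB (.conjExponent hp)
  · obtain ⟨n, hmono, -, -, -, hsup⟩ := hdesc hf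
    have : TopologicalSpace.SeparableSpace (lp (fun _ : Option (ℕ × ℕ) => ℂ) p) :=
      ⟨_, Set.countable_range _, hf⟩
    exact hB.exists_isHypercyclicAlgebra hp2 hmono.tendsto_atTop hsup
  · rintro ⟨S, ⟨f, hfS, hf⟩, -, -, -, hS⟩
    exact ⟨f, hS f hfS hf⟩
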